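/- Let n ≥ 1, let m > 0 and set ε_m = min(1/(32(1+m)), 1/(32·m·(1+m))). Let H : ℝ^{2n} → M_{2n}(ℝ) be a differentiable matrix-valued map, and let x, p ∈ ℝ^{2n} with ‖x‖ ≤ m and ‖p‖ ≤ m. Assume the C¹-bound ‖H(x)‖ + (Σ_{i=1}^{2n} ‖(∂H_{i,j}/∂x_k(x))_{j,k}‖²)^{1/2} ≤ ε_m (all matrix norms being operator norms). Let A(x) be the 2n×2n matrix with entries A(x)_{j,k} = Σ_{i=1}^{2n} 2(x_i − p_i)·∂H_{i,j}/∂x_k(x). Then for every X ∈ ℝ^{2n}: (7/2)·‖X‖² ≤ Q(J_st + H(x), 2·I_{2n}, A(x), X) ≤ (9/2)·‖X‖². (This is the two-sided bound on the Levi form of u = ‖·−p‖² with respect to J = J_st + H on a domain bounded by m.) -/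

import Mathlib

open Matrix

/-- The Euclidean norm of a real vector. -/
noncomputable def evnorm {m : Type*} [Fintype m] (x : m → ℝ) : ℝ :=
  Real.sqrt (∑ i, x i ^ 2)

/-- The operator norm of a real matrix with respect to the Euclidean norm. -/
noncomputable def opnorm {m : Type*} [Fintype m] [DecidableEq m]
    (M : Matrix m m ℝ) : ℝ :=
  ‖Matrix.toEuclideanCLM (𝕜 := ℝ) M‖

/-- The coordinate expression of the Levi form:
`Q(J,D,A,X) = XᵀDX + (JX)ᵀD(JX) + Xᵀ(A − Aᵀ)(JX)`. -/
noncomputable def LeviQ {m : Type*} [Fintype m] (J D A : Matrix m m ℝ) (X : m → ℝ) : ℝ :=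
  X ⬝ᵥ D.mulVec X + (J.mulVec X) ⬝ᵥ D.mulVec (J.mulVec X)
    + X ⬝ᵥ ((A - Aᵀ).mulVec (J.mulVec X))

/-- The standard complex structure `J_st = [[0, −Iₙ],[Iₙ, 0]]` on `ℝ^{2n} = ℝⁿ ⊕ ℝⁿ`. -/
def Jstd (n : ℕ) : Matrix (Fin n ⊕ Fin n) (Fin n ⊕ Fin n) ℝ :=
  Matrix.fromBlocks 0 (-1) 1 0

lemma evnorm_eq {ι : Type*} [Fintype ι] (v : ι → ℝ) : evnorm v = ‖WithLp.toLp 2 v‖ := by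
  simp [evnorm, EuclideanSpace.norm_eq]

lemma evnorm_nonneg' {ι : Type*} [Fintype ι] (v : ι → ℝ) : 0 ≤ evnorm v := Real.sqrt_nonneg _

lemma evnorm_add_le {ι : Type*} [Fintype ι] (v w : ι → ℝ) :
    evnorm (v + w) ≤ evnorm v + evnorm w := by
  simp only [evnorm_eq, WithLp.toLp_add]
  exact norm_add_le _ _

lemma evnorm_sub_le {ι : Type*} [Fintype ι] (v w : ι → ℝ) :
    evnorm (v - w) ≤ evnorm v + evnorm w := by
  simp only [evnorm_eq, WithLp.toLp_sub]
  exact norm_sub_le _ _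

lemma evnorm_sq {ι : Type*} [Fintype ι] (v : ι → ℝ) : evnorm v ^ 2 = v ⬝ᵥ v := by
  unfold evnorm
  rw [Real.sq_sqrt (Finset.sum_nonneg fun i _ => sq_nonneg _)]
  simp [dotProduct, sq]

lemma abs_dot_le {ι : Type*} [Fintype ι] (v w : ι → ℝ) :
    |v ⬝ᵥ w| ≤ evnorm v * evnorm w := by
  apply abs_le_of_sq_le_sq
  · rw [mul_pow, evnorm, evnorm, Real.sq_sqrt (Finset.sum_nonneg fun i _ => sq_nonneg _),
      Real.sq_sqrt (Finset.sum_nonneg fun i _ => sq_nonneg _)]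
    exact Finset.sum_mul_sq_le_sq_mul_sq _ _ _
  · exact mul_nonneg (evnorm_nonneg' _) (evnorm_nonneg' _)

lemma evnorm_mulVec_le {ι : Type*} [Fintype ι] [DecidableEq ι] (M : Matrix ι ι ℝ) (v : ι → ℝ) :
    evnorm (M *ᵥ v) ≤ opnorm M * evnorm v := by
  simp only [evnorm_eq]
  have := (Matrix.toEuclideanCLM (𝕜 := ℝ) M).le_opNorm (WithLp.toLp 2 v)
  simpa [opnorm] using this

lemma evnorm_Jstd {n : ℕ} (X : (Fin n ⊕ Fin n) → ℝ) : evnorm (Jstd n *ᵥ X) = evnorm X := by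
  unfold evnorm Jstd
  congr 1
  simp [Matrix.fromBlocks_mulVec, Fintype.sum_sum_type, Matrix.neg_mulVec]
  ring

lemma form_bound {ι : Type*} [Fintype ι] [DecidableEq ι] (c : ι → ℝ) (M : ι → Matrix ι ι ℝ)
    (v w : ι → ℝ) :
    |v ⬝ᵥ ((Matrix.of fun j k => ∑ i, 2 * c i * M i j k) *ᵥ w)| ≤
      2 * evnorm c * Real.sqrt (∑ i, opnorm (M i) ^ 2) * (evnorm v * evnorm w) := by
  have h1 : v ⬝ᵥ ((Matrix.of fun j k => ∑ i, 2 * c i * M i j k) *ᵥ w)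
      = 2 * (c ⬝ᵥ fun i => v ⬝ᵥ (M i *ᵥ w)) := by
    have : (Matrix.of fun j k => ∑ i, 2 * c i * M i j k) = ∑ i, (2 * c i) • M i := by
      ext j k
      simp [Matrix.sum_apply]
    rw [this, Matrix.sum_mulVec, dotProduct_sum]
    simp only [Matrix.smul_mulVec, dotProduct_smul, smul_eq_mul]
    simp only [dotProduct, Finset.mul_sum, mul_assoc]
  have h2 : evnorm (fun i => v ⬝ᵥ (M i *ᵥ w)) ≤
      Real.sqrt (∑ i, opnorm (M i) ^ 2) * (evnorm v * evnorm w) := by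
    have hvw := mul_nonneg (evnorm_nonneg' v) (evnorm_nonneg' w)
    rw [← Real.sqrt_sq hvw, ← Real.sqrt_mul (Finset.sum_nonneg fun i _ => sq_nonneg _)]
    apply Real.sqrt_le_sqrt
    rw [Finset.sum_mul]
    apply Finset.sum_le_sum
    intro i _
    rw [← mul_pow, ← sq_abs]
    apply pow_le_pow_left₀ (abs_nonneg _)
    calc _ ≤ _ := abs_dot_le _ _
      _ ≤ evnorm v * (opnorm (M i) * evnorm w) :=
        mul_le_mul_of_nonneg_left (evnorm_mulVec_le _ _) (evnorm_nonneg' _)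
      _ = _ := by ring
  rw [h1, abs_mul, abs_two]
  have h3 := abs_dot_le c (fun i => v ⬝ᵥ (M i *ᵥ w))
  have h4 := mul_le_mul_of_nonneg_left h2 (evnorm_nonneg' c)
  nlinarith

lemma eps_bounds (m h S : ℝ) (hm : 0 < m) (hh0 : 0 ≤ h) (hS0 : 0 ≤ S)
    (hbound : h + S ≤ min (1 / (32 * (1 + m))) (1 / (32 * m * (1 + m)))) :
    h + S ≤ 1 / 32 ∧ m * S ≤ 1 / 32 := by
  constructor
  · refine (hbound.trans (min_le_left _ _)).trans ?_
    exact one_div_le_one_div_of_le (by norm_num) (by linarith)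
  · have := hbound.trans (min_le_right _ _)
    rw [le_div_iff₀ (by positivity)] at this
    have a1 : 0 ≤ m * h := by positivity
    have a2 : 0 ≤ m * (m * h) := by positivity
    have a3 : 0 ≤ m * (m * S) := by positivity
    nlinarith

lemma final_bounds (N y a b : ℝ) (hN0 : 0 ≤ N) (hY0 : 0 ≤ y) (hYu : y ≤ 33 / 32 * N)
    (hYl : 31 / 32 * N ≤ y) (h1 : |a| ≤ 1 / 8 * (N * y)) (h2 : |b| ≤ 1 / 8 * (y * N)) :
    7 / 2 * N ^ 2 ≤ 2 * N ^ 2 + 2 * y ^ 2 + (a - b) ∧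
      2 * N ^ 2 + 2 * y ^ 2 + (a - b) ≤ 9 / 2 * N ^ 2 := by
  have f1 := abs_le.1 h1
  have f2 := abs_le.1 h2
  have g1 : y * N ≤ 33 / 32 * N * N := mul_le_mul_of_nonneg_right hYu hN0
  have g2 : y ^ 2 ≤ (33 / 32 * N) ^ 2 := pow_le_pow_left₀ hY0 hYu 2
  have g3 : (31 / 32 * N) ^ 2 ≤ y ^ 2 := pow_le_pow_left₀ (by positivity) hYl 2
  have g4 := sq_nonneg N
  constructor <;> nlinarith

/-- Let `m > 0`, `ε_m = min(1/(32(1+m)), 1/(32m(1+m)))`, and let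
`H : ℝ^{2n} → M_{2n}(ℝ)` be differentiable with C¹-bound
`‖H(x)‖ + (Σᵢ ‖(∂H_{i,j}/∂x_k(x))_{j,k}‖²)^{1/2} ≤ ε_m` at a point `x` with
`‖x‖, ‖p‖ ≤ m`. With `A(x)_{j,k} = Σᵢ 2(xᵢ − pᵢ)·∂H_{i,j}/∂x_k(x)` (the Levi data of
`u = ‖·−p‖²`, whose Hessian is `2I`), one has
`(7/2)‖X‖² ≤ Q(J_st + H(x), 2I, A(x), X) ≤ (9/2)‖X‖²`. -/
theorem stmt12 {n : ℕ} (hn : 1 ≤ n) (m : ℝ) (hm : 0 < m)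
    (H : ((Fin n ⊕ Fin n) → ℝ) → Matrix (Fin n ⊕ Fin n) (Fin n ⊕ Fin n) ℝ)
    (x p : (Fin n ⊕ Fin n) → ℝ)
    (hdiff : ∀ i j, DifferentiableAt ℝ (fun y => H y i j) x)
    (hx : evnorm x ≤ m) (hp : evnorm p ≤ m)
    (hbound : opnorm (H x)
        + Real.sqrt (∑ i, opnorm (Matrix.of fun j k =>
            fderiv ℝ (fun y => H y i j) x (Pi.single k 1)) ^ 2)
      ≤ min (1 / (32 * (1 + m))) (1 / (32 * m * (1 + m))))
    (X : (Fin n ⊕ Fin n) → ℝ) :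
    (7 / 2) * evnorm X ^ 2 ≤
        LeviQ (Jstd n + H x) ((2 : ℝ) • (1 : Matrix (Fin n ⊕ Fin n) (Fin n ⊕ Fin n) ℝ))
          (Matrix.of fun j k => ∑ i, 2 * (x i - p i)
            * fderiv ℝ (fun y => H y i j) x (Pi.single k 1)) X ∧
      LeviQ (Jstd n + H x) ((2 : ℝ) • (1 : Matrix (Fin n ⊕ Fin n) (Fin n ⊕ Fin n) ℝ))
          (Matrix.of fun j k => ∑ i, 2 * (x i - p i)
            * fderiv ℝ (fun y => H y i j) x (Pi.single k 1)) X
        ≤ (9 / 2) * evnorm X ^ 2 := by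
  have hone : (0:ℝ) < 1 + m := by linarith
  set S := Real.sqrt (∑ i, opnorm (Matrix.of fun j k =>
            fderiv ℝ (fun y => H y i j) x (Pi.single k 1)) ^ 2) with hS
  set A : Matrix (Fin n ⊕ Fin n) (Fin n ⊕ Fin n) ℝ := Matrix.of fun j k => ∑ i, 2 * (x i - p i)
            * fderiv ℝ (fun y => H y i j) x (Pi.single k 1) with hA
  set h := opnorm (H x) with hh
  set N := evnorm X with hN
  set Y := (Jstd n + H x) *ᵥ X with hY
  have hh0 : 0 ≤ h := norm_nonneg _
  have hS0 : 0 ≤ S := Real.sqrt_nonneg _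
  have hN0 : 0 ≤ N := evnorm_nonneg' _
  have hY0 : 0 ≤ evnorm Y := evnorm_nonneg' _
  obtain ⟨e1, e2⟩ := eps_bounds m h S hm hh0 hS0 hbound
  have hc : evnorm (x - p) ≤ 2 * m := (evnorm_sub_le x p).trans (by linarith)
  have hform : ∀ v w, |v ⬝ᵥ (A *ᵥ w)| ≤ (1 / 8) * (evnorm v * evnorm w) := by
    intro v w
    have := form_bound (x - p) (fun i => Matrix.of fun j k =>
            fderiv ℝ (fun y => H y i j) x (Pi.single k 1)) v w
    refine (this : |v ⬝ᵥ (A *ᵥ w)| ≤ 2 * evnorm (x - p) * S * (evnorm v * evnorm w)).trans ?_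
    apply mul_le_mul_of_nonneg_right _ (mul_nonneg (evnorm_nonneg' _) (evnorm_nonneg' _))
    have h7 := mul_le_mul_of_nonneg_right hc hS0
    linarith
  have hHX : evnorm (H x *ᵥ X) ≤ h * N := evnorm_mulVec_le _ _
  have hHX' : h * N ≤ 1 / 32 * N := mul_le_mul_of_nonneg_right (by linarith) hN0
  have hYu : evnorm Y ≤ 33 / 32 * N := by
    have := evnorm_add_le (Jstd n *ᵥ X) (H x *ᵥ X)
    rw [← Matrix.add_mulVec, evnorm_Jstd] at this
    change evnorm Y ≤ N + _ at this
    linarith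
  have hYl : 31 / 32 * N ≤ evnorm Y := by
    have := evnorm_sub_le Y (H x *ᵥ X)
    rw [hY, ← Matrix.sub_mulVec, add_sub_cancel_right, evnorm_Jstd, ← hY] at this
    change N ≤ _ at this
    linarith
  have hQ : LeviQ (Jstd n + H x) ((2 : ℝ) • (1 : Matrix (Fin n ⊕ Fin n) (Fin n ⊕ Fin n) ℝ)) A X
      = 2 * N ^ 2 + 2 * evnorm Y ^ 2 + (X ⬝ᵥ (A *ᵥ Y) - Y ⬝ᵥ (A *ᵥ X)) := by
    have ht : X ⬝ᵥ (Aᵀ *ᵥ Y) = Y ⬝ᵥ (A *ᵥ X) := by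
      rw [Matrix.mulVec_transpose, dotProduct_comm, ← Matrix.dotProduct_mulVec]
    rw [hN, evnorm_sq, evnorm_sq, ← ht]
    simp only [LeviQ, Matrix.smul_mulVec, Matrix.one_mulVec, dotProduct_smul, smul_eq_mul,
      Matrix.sub_mulVec, dotProduct_sub, ← hY]
  rw [hQ]
  exact final_bounds N (evnorm Y) _ _ hN0 hY0 hYu hYl (hform X Y) (hform Y X)
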